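/- For every integer n ≥ 0, the following identities of polynomials hold: D_n(x) − T_n(x) = D⁺_{n+1}(x) − T⁺_{n+1}(x), and x·(D_n(x) − T_n(x)) = T⁻_{n+2}(x) − D⁻_{n+2}(x). -/

import Mathlib

/-!
Let `ε(π)` be `-1` to the number of negative entries of `π`, so that `D_n - T_n` is the sum of
`ε(π) x^{des π}` over the simsun `π`, and similarly for `D⁺ - T⁺` and `D⁻ - T⁻`.

Every signed permutation of rank `n + 1` arises exactly once by inserting `N` or `-N`, where
`N = n + 1`, into one of the `n + 1` gaps after the entries of the word of some `π` of rank `n`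
(`ins_bij`). The result is simsun iff `π` is simsun and the new word has no double descent
(`simsun_ins`). Fix a simsun `π` with word `a₀a₁⋯aₙ` and `d` descents, let `pᵢ`, `qᵢ` be the
weights (`x^{des}`, or `0` if there is a double descent) of inserting `N`, resp. `-N`, right after
`aᵢ`, and let `uᵢ` be `x^d` if `aᵢ > aᵢ₊₁` and `0` otherwise. Then

* `pᵢ - uᵢ = qᵢ₊₁ - uᵢ₊₁` for `i < n` (`wt_swap`): both sides are `x^{d+1}` if neither `i` nor `i+1`
  is a descent, and `0` otherwise;
* `pₙ = x^d`, `uₙ = 0` (`wt_concat`).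

Hence `∑ (pᵢ - qᵢ)` telescopes (`sum_ins`, `sum_ins_succ`). Insertion in a gap `i ≥ 1` keeps the
first entry, and insertion in gap `0` gives a first entry of the sign of the inserted one. Together
with the values of `p₀`, `q₀` (`wt_ins_zero_false`, `wt_ins_zero_true`), each `π` contributes
`ε(π) x^d` to `D⁺_{n+1} - T⁺_{n+1}` (`pos_succ`); to `D⁻_{n+1} - T⁻_{n+1}` it contributes
`-ε(π) x^{d+1}` if `a₁ > 0` or `n = 0`, and `0` if `a₁ < 0` (`neg_succ`). The first fact is the
first identity, and the two facts together give the second.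
-/

open Finset

/-- A signed permutation of rank `n`, encoded as an (unsigned) permutation of
`Fin n` together with a choice of sign for each position: the entry
`π(i+1)` of the word is `±(σ(i)+1)` where the sign is `-` iff `sgn i = true`. -/
abbrev SignedPerm (n : ℕ) := Equiv.Perm (Fin n) × (Fin n → Bool)

/-- The entry `π(j+1)` of the word of a signed permutation. -/
def entry {n : ℕ} (π : SignedPerm n) (j : Fin n) : ℤ :=
  (if π.2 j then -1 else 1) * (((π.1 j : ℕ) : ℤ) + 1)

/-- The word `π(0)π(1)⋯π(n)` of a signed permutation (with the leading `0`). -/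
def word {n : ℕ} (π : SignedPerm n) : List ℤ :=
  0 :: List.ofFn (entry π)

/-- `π(i)` for `0 ≤ i ≤ n` (and `0` outside this range). -/
def wordFn {n : ℕ} (π : SignedPerm n) (i : ℕ) : ℤ :=
  if h : 1 ≤ i ∧ i ≤ n then entry π ⟨i - 1, by omega⟩ else 0

/-- A word has no double descent: no three consecutive strictly decreasing entries. -/
def noDD : List ℤ → Bool
  | a :: b :: c :: rest => (!(decide (b < a) && decide (c < b))) && noDD (b :: c :: rest)
  | _ => true

/-- A signed permutation is simsun if for every `0 ≤ k ≤ n`, deleting the entries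
`±n, …, ±(n-k+1)` (i.e. keeping the entries of absolute value `≤ m := n - k`) from the
word `π(0)π(1)⋯π(n)` leaves a word with no three consecutive strictly decreasing
entries. -/
def IsSimsun {n : ℕ} (π : SignedPerm n) : Prop :=
  ∀ m ≤ n, noDD ((word π).filter (fun a => a.natAbs ≤ m)) = true

instance {n : ℕ} : DecidablePred (IsSimsun (n := n)) := fun _ => by
  unfold IsSimsun; infer_instance

/-- The type-B descent number `des_B(π) = #{0 ≤ i ≤ n-1 : π(i) > π(i+1)}`. -/
def desB {n : ℕ} (π : SignedPerm n) : ℕ :=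
  ((Finset.range n).filter (fun i => wordFn π (i + 1) < wordFn π i)).card

/-- The set of signed simsun permutations of rank `n`. -/
def RB (n : ℕ) : Finset (SignedPerm n) := univ.filter IsSimsun

/-- Signed simsun permutations with `π(1) > 0` (for `n = 0`, the empty permutation
is included, following the convention `R⁺_0 = 1`). -/
def RBp (n : ℕ) : Finset (SignedPerm n) :=
  (RB n).filter (fun π => 0 < wordFn π 1 ∨ n = 0)

/-- Signed simsun permutations with `π(1) < 0`. -/
def RBm (n : ℕ) : Finset (SignedPerm n) :=
  (RB n).filter (fun π => wordFn π 1 < 0)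

/-- A signed permutation is even-signed if its word has an even number of negative entries. -/
def IsEvenSigned {n : ℕ} (π : SignedPerm n) : Prop :=
  (univ.filter (fun j => π.2 j = true)).card % 2 = 0

instance {n : ℕ} : DecidablePred (IsEvenSigned (n := n)) := fun _ => by
  unfold IsEvenSigned; infer_instance

def RD (n : ℕ) : Finset (SignedPerm n) := (RB n).filter IsEvenSigned
def RT (n : ℕ) : Finset (SignedPerm n) := (RB n).filter (fun π => ¬ IsEvenSigned π)
def RDp (n : ℕ) : Finset (SignedPerm n) := (RD n).filter (fun π => 0 < wordFn π 1 ∨ n = 0)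
def RDm (n : ℕ) : Finset (SignedPerm n) := (RD n).filter (fun π => wordFn π 1 < 0)
def RTp (n : ℕ) : Finset (SignedPerm n) := (RT n).filter (fun π => 0 < wordFn π 1 ∨ n = 0)
def RTm (n : ℕ) : Finset (SignedPerm n) := (RT n).filter (fun π => wordFn π 1 < 0)

/-- `R(n,k)`, as an integer, vanishing for `k < 0`. -/
def Rcnt (n : ℕ) (k : ℤ) : ℤ := ((RB n).filter (fun π => (desB π : ℤ) = k)).card
def Rpcnt (n : ℕ) (k : ℤ) : ℤ := ((RBp n).filter (fun π => (desB π : ℤ) = k)).card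
def Rmcnt (n : ℕ) (k : ℤ) : ℤ := ((RBm n).filter (fun π => (desB π : ℤ) = k)).card
def Dcnt (n : ℕ) (k : ℤ) : ℤ := ((RD n).filter (fun π => (desB π : ℤ) = k)).card
def Tcnt (n : ℕ) (k : ℤ) : ℤ := ((RT n).filter (fun π => (desB π : ℤ) = k)).card
def Dpcnt (n : ℕ) (k : ℤ) : ℤ := ((RDp n).filter (fun π => (desB π : ℤ) = k)).card
def Dmcnt (n : ℕ) (k : ℤ) : ℤ := ((RDm n).filter (fun π => (desB π : ℤ) = k)).card
def Tpcnt (n : ℕ) (k : ℤ) : ℤ := ((RTp n).filter (fun π => (desB π : ℤ) = k)).card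
def Tmcnt (n : ℕ) (k : ℤ) : ℤ := ((RTm n).filter (fun π => (desB π : ℤ) = k)).card

open Polynomial in
/-- The descent polynomial `R_n(x) = Σ_{π ∈ RB_n} x^{des_B(π)}`. -/
noncomputable def Rpoly (n : ℕ) : ℚ[X] := ∑ π ∈ RB n, X ^ desB π
open Polynomial in
noncomputable def Rppoly (n : ℕ) : ℚ[X] := ∑ π ∈ RBp n, X ^ desB π
open Polynomial in
noncomputable def Rmpoly (n : ℕ) : ℚ[X] := ∑ π ∈ RBm n, X ^ desB π
open Polynomial in
noncomputable def Dpoly (n : ℕ) : ℚ[X] := ∑ π ∈ RD n, X ^ desB π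
open Polynomial in
noncomputable def Tpoly (n : ℕ) : ℚ[X] := ∑ π ∈ RT n, X ^ desB π
open Polynomial in
noncomputable def Dppoly (n : ℕ) : ℚ[X] := ∑ π ∈ RDp n, X ^ desB π
open Polynomial in
noncomputable def Dmpoly (n : ℕ) : ℚ[X] := ∑ π ∈ RDm n, X ^ desB π
open Polynomial in
noncomputable def Tppoly (n : ℕ) : ℚ[X] := ∑ π ∈ RTp n, X ^ desB π
open Polynomial in
noncomputable def Tmpoly (n : ℕ) : ℚ[X] := ∑ π ∈ RTm n, X ^ desB π

open Polynomial

/-! ### Weights of words and insertion of an extreme letter -/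

/-- The number of descents of a word. -/
def desL : List ℤ → ℕ
  | a :: b :: r => (if b < a then 1 else 0) + desL (b :: r)
  | _ => 0

/-- The weight of a word: `x` to the number of descents, or `0` if it has a double descent. -/
noncomputable def wt (L : List ℤ) : ℚ[X] := if noDD L then X ^ desL L else 0

/-- The indicator of a descent from `a` to the first letter of the word that follows it. -/
noncomputable def dsc (a : ℤ) : List ℤ → ℚ[X]
  | [] => 0
  | b :: _ => if b < a then 1 else 0

lemma noDD_split (A : List ℤ) (a b : ℤ) (C : List ℤ) :
    noDD (A ++ a :: b :: C) = (noDD (A ++ [a, b]) && noDD (a :: b :: C)) := by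
  induction A with
  | nil => simp [noDD]
  | cons x A ih =>
    rcases A with _ | ⟨y, A⟩
    · simp [noDD]
    · rcases A with _ | ⟨z, A⟩ <;> simp_all [noDD, Bool.and_assoc]

lemma noDD_concat_asc (A : List ℤ) (a c : ℤ) (h : a < c) :
    noDD (A ++ [a, c]) = noDD (A ++ [a]) := by
  induction A with
  | nil => simp [noDD]
  | cons x A ih =>
    rcases A with _ | ⟨y, A⟩
    · simp [noDD, h.le]
    · rcases A with _ | ⟨z, A⟩ <;> simp_all [noDD]

lemma noDD_init (A : List ℤ) (a b : ℤ) (h : noDD (A ++ [a, b]) = true) :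
    noDD (A ++ [a]) = true := by
  induction A with
  | nil => simp [noDD]
  | cons x A ih =>
    rcases A with _ | ⟨y, A⟩
    · simp [noDD]
    · rcases A with _ | ⟨z, A⟩ <;> simp_all [noDD]

lemma desL_split (A : List ℤ) (a : ℤ) (C : List ℤ) :
    desL (A ++ a :: C) = desL (A ++ [a]) + desL (a :: C) := by
  induction A with
  | nil => simp [desL]
  | cons x A ih =>
    rcases A with _ | ⟨y, A⟩
    · simp [desL]
    · simp_all [desL, add_assoc]

/-- Inserting `N` just before `b` and inserting `-N` just after `b` have the same weight up to the
descent corrections, which makes the signed sum over all gaps telescope. -/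
lemma wt_swap (A B : List ℤ) (a b N : ℤ) (h : noDD (A ++ a :: b :: B) = true)
    (ha : |a| < N) (hb : |b| < N) (hB : ∀ c ∈ B, |c| < N) :
    wt (A ++ a :: N :: b :: B) - dsc a (b :: B) * X ^ desL (A ++ a :: b :: B) =
      wt (A ++ a :: b :: -N :: B) - dsc b B * X ^ desL (A ++ a :: b :: B) := by
  rw [abs_lt] at ha hb
  rw [noDD_split, Bool.and_eq_true] at h
  obtain ⟨h1, h2⟩ := h
  have h3 := noDD_init _ _ _ h1
  have e1 : noDD (A ++ a :: N :: b :: B) = noDD (N :: b :: B) := by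
    rw [noDD_split, noDD_concat_asc _ _ _ ha.2, h3]
    simp [noDD, ha.2.le]
  have e2 : noDD (A ++ a :: b :: -N :: B) = noDD (a :: b :: -N :: B) := by
    rw [noDD_split, h1]; simp
  unfold wt
  rw [e1, e2, desL_split A a (N :: b :: B), desL_split A a (b :: B), desL_split A a (b :: -N :: B)]
  rcases B with _ | ⟨c, B⟩
  · by_cases hab : b < a <;>
      simp [noDD, desL, dsc, hab, hb.1, hb.2, not_lt.2 ha.2.le]
  · have hc := abs_lt.1 (hB c (by simp))
    have h4 : noDD (b :: c :: B) = true := by simp [noDD] at h2; exact h2.2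
    have h5 : noDD (-N :: c :: B) = true := by
      rcases B with _ | ⟨e, B⟩
      · simp [noDD]
      · simp only [noDD, Bool.and_eq_true] at h4 ⊢
        exact ⟨by simp [hc.1.le], h4.2⟩
    by_cases hab : b < a <;> by_cases hbc : c < b
    · exfalso; simp [noDD] at h2; omega
    all_goals
      simp [noDD, desL, dsc, hab, hbc, hb.1, hb.2, not_lt.2 hc.1.le, h4, h5, not_lt.2 ha.2.le]

/-- Inserting a large letter at the end of a word leaves its weight unchanged. -/
lemma wt_concat (A : List ℤ) (a N : ℤ) (h : noDD (A ++ [a]) = true) (ha : a < N) :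
    wt (A ++ [a, N]) = X ^ desL (A ++ [a]) := by
  unfold wt
  rw [noDD_concat_asc _ _ _ ha, h, desL_split]
  simp [desL, not_lt.2 ha.le]

/-- The signed sum over the gaps of `A ++ a :: B` that lie to the right of `a`. -/
lemma sum_ins (N : ℤ) (B : List ℤ) : ∀ (A : List ℤ) (a : ℤ), noDD (A ++ a :: B) = true →
    |a| < N → (∀ c ∈ B, |c| < N) →
    ∑ i ∈ range (B.length + 1), (wt (A ++ a :: (B.take i ++ N :: B.drop i)) -
      wt (A ++ a :: (B.take i ++ -N :: B.drop i))) =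
    X ^ desL (A ++ a :: B) - wt (A ++ a :: -N :: B) + dsc a B * X ^ desL (A ++ a :: B) := by
  induction B with
  | nil =>
    intro A a h ha _
    simp [wt_concat A a N h (abs_lt.1 ha).2, dsc]
  | cons b B ih =>
    intro A a h ha hB
    have hb : |b| < N := hB b (by simp)
    have hB' : ∀ c ∈ B, |c| < N := fun c hc => hB c (by simp [hc])
    rw [sum_range_succ']
    have := ih (A ++ [a]) b (by simpa using h) hb hB'
    simp only [List.append_assoc, List.cons_append, List.nil_append] at this
    simp only [List.length_cons, List.take_succ_cons, List.drop_succ_cons, List.cons_append, this,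
      List.take_zero, List.drop_zero, List.nil_append]
    linear_combination wt_swap A B a b N h ha hb hB'

/-! ### Insertion of the largest letter into a signed permutation -/

/-- The entry `±(n + 1)`, negative iff `s = true`. -/
def topEntry (n : ℕ) (s : Bool) : ℤ := if s then -((n : ℤ) + 1) else (n : ℤ) + 1

/-- The signed permutation of rank `n + 1` obtained from `π` by inserting `±(n + 1)` so that it
becomes the entry number `i` (counted from `0`, the leading `0` of the word excluded). -/
def ins {n : ℕ} (π : SignedPerm n) (i : Fin (n + 1)) (s : Bool) : SignedPerm (n + 1) :=
  ((finSuccEquiv' i).trans ((Equiv.optionCongr π.1).trans (finSuccEquiv' (Fin.last n)).symm),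
    Fin.insertNth (α := fun _ => Bool) i s π.2)

lemma entry_ins_self {n : ℕ} (π : SignedPerm n) (i : Fin (n + 1)) (s : Bool) :
    entry (ins π i s) i = topEntry n s := by
  cases s <;> simp [entry, ins, topEntry]

lemma entry_ins_succAbove {n : ℕ} (π : SignedPerm n) (i : Fin (n + 1)) (s : Bool) (j : Fin n) :
    entry (ins π i s) (i.succAbove j) = entry π j := by
  simp [entry, ins]

lemma abs_entry {n : ℕ} (π : SignedPerm n) (j : Fin n) : |entry π j| = (π.1 j : ℕ) + 1 := by
  have : |(((π.1 j : ℕ) : ℤ) + 1)| = (π.1 j : ℕ) + 1 := abs_of_nonneg (by positivity)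
  unfold entry; split_ifs <;> simp only [abs_mul, this] <;> simp

lemma abs_entry_lt {n : ℕ} (π : SignedPerm n) (j : Fin n) : |entry π j| < n + 1 := by
  rw [abs_entry]; have := (π.1 j).2; omega

lemma entry_inj {n : ℕ} {π ρ : SignedPerm n} (h : entry π = entry ρ) : π = ρ := by
  have h1 : π.1 = ρ.1 := by
    ext j
    have := congrArg abs (congrFun h j)
    rw [abs_entry, abs_entry] at this; omega
  refine Prod.ext h1 (funext fun j => ?_)
  have := congrFun h j
  unfold entry at this
  rw [h1] at this
  cases h2 : π.2 j <;> cases h3 : ρ.2 j <;> simp [h2, h3] at this ⊢ <;> omega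

lemma ins_inj {n : ℕ} : Function.Injective
    (fun x : SignedPerm n × Fin (n + 1) × Bool => ins x.1 x.2.1 x.2.2) := by
  rintro ⟨π, i, s⟩ ⟨ρ, k, r⟩ h
  simp only at h
  have hik : i = k := by
    by_contra hne
    obtain ⟨j, hj⟩ := Fin.exists_succAbove_eq hne
    have h1 := entry_ins_self π i s
    rw [h, ← hj, entry_ins_succAbove] at h1
    have h2 := abs_entry_lt ρ j
    have h3 : |topEntry n s| = n + 1 := by
      have : |((n : ℤ) + 1)| = n + 1 := abs_of_nonneg (by positivity)
      cases s
      · simpa [topEntry] using this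
      · simp only [topEntry, if_true, abs_neg, this]
    rw [h1] at h2; omega
  subst hik
  have hs : s = r := by
    have := congrArg (fun τ => τ.2 i) h
    simpa [ins] using this
  have hp : π = ρ := entry_inj (funext fun j => by
    rw [← entry_ins_succAbove π i s, ← entry_ins_succAbove ρ i r, h])
  rw [hs, hp]

lemma ins_bij {n : ℕ} : Function.Bijective
    (fun x : SignedPerm n × Fin (n + 1) × Bool => ins x.1 x.2.1 x.2.2) := by
  rw [Fintype.bijective_iff_injective_and_card]
  refine ⟨ins_inj, ?_⟩
  simp [Fintype.card_perm, Nat.factorial_succ, pow_succ]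
  ring

lemma sum_signedPerm_succ {n : ℕ} (F : SignedPerm (n + 1) → ℚ[X]) :
    ∑ π, F π = ∑ π : SignedPerm n, ∑ i, (F (ins π i false) + F (ins π i true)) := by
  rw [← ins_bij.sum_comp F, Fintype.sum_prod_type]
  refine sum_congr rfl fun π _ => ?_
  rw [Fintype.sum_prod_type]
  refine sum_congr rfl fun i _ => ?_
  simp [add_comm]

lemma ofFn_ins {n : ℕ} (π : SignedPerm n) (i : Fin (n + 1)) (s : Bool) :
    List.ofFn (entry (ins π i s)) = (List.ofFn (entry π)).take i ++
      topEntry n s :: (List.ofFn (entry π)).drop i := by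
  have hi := i.2
  apply List.ext_getElem
  · simp; omega
  intro k h1 h2
  simp only [List.length_ofFn] at h1
  rw [List.getElem_ofFn, List.getElem_append]
  have hl : (List.take (i : ℕ) (List.ofFn (entry π))).length = i := by simp; omega
  simp only [hl]
  rcases lt_trichotomy k i with h | h | h
  · have : (⟨k, h1⟩ : Fin (n + 1)) = i.succAbove ⟨k, by omega⟩ := by
      rw [Fin.succAbove_of_castSucc_lt _ _ (by simpa [Fin.lt_def] using h)]; rfl
    rw [this, entry_ins_succAbove]; simp [h]
  · have : (⟨k, h1⟩ : Fin (n + 1)) = i := Fin.ext h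
    rw [this, entry_ins_self]; simp [h]
  · have : (⟨k, h1⟩ : Fin (n + 1)) = i.succAbove ⟨k - 1, by omega⟩ := by
      rw [Fin.succAbove_of_le_castSucc _ _ (by simp [Fin.le_def]; omega)]
      ext; simp; omega
    rw [this, entry_ins_succAbove]
    obtain ⟨e, rfl⟩ : ∃ e, k = i + (e + 1) := ⟨k - i - 1, by omega⟩
    simp

/-- Deleting `±(n + 1)` from `ins π i s` gives `π` back, so the only new simsun condition concerns
the full word. -/
lemma simsun_ins {n : ℕ} (π : SignedPerm n) (i : Fin (n + 1)) (s : Bool) :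
    IsSimsun (ins π i s) ↔ IsSimsun π ∧ noDD (word (ins π i s)) = true := by
  have hval : (topEntry n s).natAbs = n + 1 := by cases s <;> simp [topEntry] <;> omega
  have hsmall : ∀ m ≤ n, (word (ins π i s)).filter (fun a => a.natAbs ≤ m) =
      (word π).filter (fun a => a.natAbs ≤ m) := by
    intro m hm
    unfold word
    rw [ofFn_ins]
    conv_rhs => rw [← List.take_append_drop i (List.ofFn (entry π))]
    simp only [List.filter_cons, List.filter_append, hval]
    simp [show ¬ (n + 1 ≤ m) by omega]
  have hbig : (word (ins π i s)).filter (fun a => a.natAbs ≤ n + 1) = word (ins π i s) := by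
    rw [List.filter_eq_self]
    intro a ha
    simp only [word, List.mem_cons, List.mem_ofFn] at ha
    rcases ha with rfl | ⟨j, rfl⟩
    · simp
    · have := abs_entry (ins π i s) j
      have h2 := ((ins π i s).1 j).2
      simp only [decide_eq_true_eq]; rw [Int.abs_eq_natAbs] at this; omega
  constructor
  · intro h
    exact ⟨fun m hm => by rw [← hsmall m hm]; exact h m (by omega), by
      rw [← hbig]; exact h (n + 1) le_rfl⟩
  · rintro ⟨h1, h2⟩ m hm
    rcases Nat.lt_or_ge n m with h | h
    · obtain rfl : m = n + 1 := by omega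
      rw [hbig]; exact h2
    · rw [hsmall m h]; exact h1 m h

lemma simsun_noDD {n : ℕ} (π : SignedPerm n) (h : IsSimsun π) : noDD (word π) = true := by
  have := h n le_rfl
  rwa [List.filter_eq_self.2] at this
  intro a ha
  simp only [word, List.mem_cons, List.mem_ofFn] at ha
  rcases ha with rfl | ⟨j, rfl⟩
  · simp
  · have := abs_entry_lt π j
    simp only [decide_eq_true_eq]; rw [Int.abs_eq_natAbs] at this; omega

lemma desL_eq (l : List ℤ) : ∀ a : ℤ, desL (a :: l) =
    ((range l.length).filter (fun i => (a :: l).getD (i + 1) 0 < (a :: l).getD i 0)).card := by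
  induction l with
  | nil => simp [desL]
  | cons b l ih =>
    intro a
    have := ih b
    rw [card_filter] at this ⊢
    rw [List.length_cons, sum_range_succ', desL, this, add_comm]
    simp

lemma wordFn_eq {n : ℕ} (π : SignedPerm n) (i : ℕ) : wordFn π i = (word π).getD i 0 := by
  unfold wordFn word
  rcases i with _ | i
  · simp
  · by_cases h : i + 1 ≤ n
    · simp [h]
    · simp [h]

lemma desB_eq {n : ℕ} (π : SignedPerm n) : desB π = desL (word π) := by
  rw [word, desL_eq, desB]
  simp only [wordFn_eq, word, List.length_ofFn]

/-! ### Signed descent sums -/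

/-- The sign `ε(π)`: `-1` to the number of negative entries. -/
noncomputable def eps {n : ℕ} (π : SignedPerm n) : ℚ[X] := ∏ j, if π.2 j then -1 else 1

lemma eps_ins {n : ℕ} (π : SignedPerm n) (i : Fin (n + 1)) (s : Bool) :
    eps (ins π i s) = (if s then -1 else 1) * eps π := by
  unfold eps
  rw [Fin.prod_univ_succAbove _ i]
  simp [ins]

lemma eps_eq {n : ℕ} (π : SignedPerm n) : eps π = if IsEvenSigned π then 1 else -1 := by
  unfold eps
  rw [prod_ite, prod_const, prod_const_one, mul_one]
  by_cases h : IsEvenSigned π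
  · rw [if_pos h, Even.neg_one_pow (Nat.even_iff.2 h)]
  · rw [if_neg h, Odd.neg_one_pow (Nat.odd_iff.2 (by unfold IsEvenSigned at h; omega))]

/-- The signed weight `ε(π) x^{des π}` of a simsun `π`, and `0` if `π` is not simsun. -/
noncomputable def sw {n : ℕ} (π : SignedPerm n) : ℚ[X] :=
  if IsSimsun π then eps π * X ^ desB π else 0

lemma sum_even_sub_odd {n : ℕ} (P : SignedPerm n → Prop) [DecidablePred P] :
    ∑ π ∈ (RD n).filter P, (X : ℚ[X]) ^ desB π - ∑ π ∈ (RT n).filter P, X ^ desB π =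
      ∑ π, if P π then sw π else 0 := by
  simp only [RD, RT, RB, filter_filter, sum_filter, ← sum_sub_distrib]
  refine sum_congr rfl fun π _ => ?_
  rw [sw, eps_eq]
  by_cases h1 : IsSimsun π <;> by_cases h2 : IsEvenSigned π <;> by_cases h3 : P π <;>
    simp [h1, h2, h3]

lemma sw_ins {n : ℕ} (π : SignedPerm n) (h : IsSimsun π) (i : Fin (n + 1)) (s : Bool) :
    sw (ins π i s) = (if s then -1 else 1) * eps π * wt (word (ins π i s)) := by
  unfold sw wt
  rw [eps_ins, desB_eq]
  simp only [simsun_ins, h, true_and]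
  split_ifs <;> simp

lemma sw_ins_of_not {n : ℕ} (π : SignedPerm n) (h : ¬ IsSimsun π) (i : Fin (n + 1)) (s : Bool) :
    sw (ins π i s) = 0 := by
  unfold sw
  simp [simsun_ins, h]

lemma wordFn_ins_zero {n : ℕ} (π : SignedPerm n) (s : Bool) :
    wordFn (ins π 0 s) 1 = topEntry n s := by
  rw [wordFn_eq, word, ofFn_ins]; simp

lemma wordFn_ins_succ {n : ℕ} (π : SignedPerm n) (j : Fin n) (s : Bool) :
    wordFn (ins π j.succ s) 1 = wordFn π 1 := by
  rcases n with _ | n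
  · exact j.elim0
  · rw [wordFn_eq, wordFn_eq, word, word, ofFn_ins, List.ofFn_succ]; simp

lemma topEntry_false_pos (n : ℕ) : 0 < topEntry n false := by
  simp only [topEntry, Bool.false_eq_true, if_false]; omega

lemma topEntry_true_neg (n : ℕ) : topEntry n true < 0 := by
  simp only [topEntry, if_true]; omega

/-- The signed sum over all gaps but the one right after the leading `0`; the correction term comes
from a descent at that gap. -/
lemma sum_ins_succ {n : ℕ} (π : SignedPerm (n + 1)) (h : IsSimsun π) :
    ∑ j : Fin (n + 1), (wt (word (ins π j.succ false)) - wt (word (ins π j.succ true))) =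
      X ^ desB π + (if wordFn π 1 < 0 then X ^ desB π else 0) - wt (word (ins π 0 false)) := by
  have hdd := simsun_noDD π h
  have hbd : ∀ c ∈ List.ofFn (entry π), |c| < ((n + 1 : ℕ) : ℤ) + 1 := by
    intro c hc
    rw [List.mem_ofFn] at hc
    obtain ⟨j, rfl⟩ := hc
    exact abs_entry_lt π j
  rw [desB_eq]
  simp only [wordFn_eq]
  simp only [word, ofFn_ins] at hdd ⊢
  obtain ⟨b, B, hbB, hlen⟩ : ∃ b B, List.ofFn (entry π) = b :: B ∧ B.length = n :=
    ⟨_, _, List.ofFn_succ, by simp⟩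
  simp only [hbB] at hdd hbd ⊢
  have hB : ∀ c ∈ B, |c| < ((n + 1 : ℕ) : ℤ) + 1 := fun c hc => hbd c (by simp [hc])
  have hb := hbd b (by simp)
  have h0 : |(0 : ℤ)| < ((n + 1 : ℕ) : ℤ) + 1 := by simp; omega
  have key := sum_ins (((n + 1 : ℕ) : ℤ) + 1) B [0] b (by simpa using hdd) hb hB
  have sw1 := wt_swap [] B 0 b (((n + 1 : ℕ) : ℤ) + 1) (by simpa using hdd) h0 hb hB
  rw [hlen, ← Fin.sum_univ_eq_sum_range (fun i => wt ([0] ++ b :: (B.take i ++ _ :: B.drop i)) -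
    wt ([0] ++ b :: (B.take i ++ _ :: B.drop i)))] at key
  simp only [topEntry, Fin.val_succ, List.take_succ_cons, List.drop_succ_cons, List.cons_append,
    List.nil_append, Fin.val_zero, List.take_zero, List.drop_zero, dsc, if_true,
    Bool.false_eq_true, if_false] at key sw1 ⊢
  rw [key]
  simp only [List.getD_cons_succ, List.getD_cons_zero]
  split_ifs at sw1 ⊢ <;> linear_combination sw1

lemma wt_ins_zero_true {n : ℕ} (π : SignedPerm n) (h : IsSimsun π) :
    wt (word (ins π 0 true)) = if wordFn π 1 < 0 then X ^ desB π else X * X ^ desB π := by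
  have hdd := simsun_noDD π h
  rw [desB_eq, wordFn_eq]
  simp only [word, ofFn_ins, Fin.val_zero, List.take_zero, List.drop_zero,
    List.nil_append] at hdd ⊢
  have hN := topEntry_true_neg n
  obtain hB | ⟨b, B, hB⟩ : List.ofFn (entry π) = [] ∨ ∃ b B, List.ofFn (entry π) = b :: B := by
    cases List.ofFn (entry π) <;> simp
  · simp only [hB]; simp [wt, noDD, desL, hN]
  · have hb : topEntry n true < b := by
      have : b ∈ List.ofFn (entry π) := by simp [hB]
      rw [List.mem_ofFn] at this
      obtain ⟨j, rfl⟩ := this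
      have := abs_lt.1 (abs_entry_lt π j)
      simp only [topEntry, if_true]; omega
    simp only [hB] at hdd ⊢
    have h1 : noDD (0 :: topEntry n true :: b :: B) = true := by
      rcases B with _ | ⟨c, B⟩
      · simp [noDD, hb.le]
      · simp only [noDD, Bool.and_eq_true] at hdd ⊢
        exact ⟨by simp [hb.le], by simp [hb.le], hdd.2⟩
    by_cases hb0 : b < 0
    · simp [wt, h1, desL, hN, not_lt.2 hb.le, hb0]
    · simp [wt, h1, desL, hN, not_lt.2 hb.le, hb0, pow_add]

lemma wt_ins_zero_false {n : ℕ} (π : SignedPerm n) (h : IsSimsun π)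
    (h1 : wordFn π 1 < 0 ∨ n = 0) : wt (word (ins π 0 false)) = X ^ desB π := by
  have hdd := simsun_noDD π h
  rw [wordFn_eq] at h1
  rw [desB_eq]
  simp only [word, ofFn_ins, Fin.val_zero, List.take_zero, List.drop_zero,
    List.nil_append] at hdd h1 ⊢
  have hN := topEntry_false_pos n
  rcases hB : List.ofFn (entry π) with _ | ⟨b, B⟩
  · simp [wt, noDD, desL, not_lt.2 hN.le]
  · have hn : n ≠ 0 := by rintro rfl; simp at hB
    rw [hB] at hdd h1
    have hb : b < 0 := by simpa [hn] using h1
    have h1 : noDD (0 :: topEntry n false :: b :: B) = true := by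
      rcases B with _ | ⟨c, B⟩
      · simp [noDD, hN.le]
      · simp only [noDD, Bool.and_eq_true] at hdd ⊢
        refine ⟨by simp [hN.le], ?_, hdd.2⟩
        have := hdd.1
        simp [hb] at this
        simp [this]
    simp [wt, h1, desL, not_lt.2 hN.le, hb, hb.trans hN]

lemma wordFn_one_ne {n : ℕ} (π : SignedPerm (n + 1)) : wordFn π 1 ≠ 0 := by
  have := abs_entry π 0
  intro h
  simp only [wordFn] at h
  simp at h
  rw [h] at this; simp at this; omega

/-- `D⁺_{n+1} - T⁺_{n+1} = D_n - T_n` in terms of signed weights. -/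
lemma pos_succ (n : ℕ) :
    ∑ π : SignedPerm (n + 1), (if 0 < wordFn π 1 ∨ n + 1 = 0 then sw π else 0) =
      ∑ π : SignedPerm n, sw π := by
  rw [sum_signedPerm_succ]
  refine sum_congr rfl fun π _ => ?_
  by_cases h : IsSimsun π
  swap
  · simp [sw_ins_of_not π h]; simp [sw, h]
  rw [Fin.sum_univ_succ]
  simp only [wordFn_ins_zero, wordFn_ins_succ, topEntry_false_pos,
    not_lt.2 (topEntry_true_neg n).le, sw_ins π h, Nat.add_eq_zero_iff, one_ne_zero, and_false,
    or_false, if_true, if_false, Bool.false_eq_true]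
  simp only [sw, h, if_true]
  rcases n with _ | n
  · rw [wt_ins_zero_false π h (Or.inr rfl)]; simp
  have hs := sum_ins_succ π h
  rw [sum_sub_distrib] at hs
  rcases lt_or_gt_of_ne (wordFn_one_ne π) with h1 | h1
  · rw [wt_ins_zero_false π h (Or.inl h1)]; simp [not_lt.2 h1.le]
  · simp only [h1, if_true, not_lt.2 h1.le, if_false, sum_add_distrib, ← mul_sum] at hs ⊢
    linear_combination eps π * hs

/-- `D⁻_{n+1} - T⁻_{n+1} = -x (D⁺_n - T⁺_n)` in terms of signed weights, where for `n = 0` the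
empty permutation is counted in `D⁺_0`. -/
lemma neg_succ (n : ℕ) :
    ∑ π : SignedPerm (n + 1), (if wordFn π 1 < 0 then sw π else 0) =
      -(X * ∑ π : SignedPerm n, (if 0 < wordFn π 1 ∨ n = 0 then sw π else 0)) := by
  rw [sum_signedPerm_succ, mul_sum, ← sum_neg_distrib]
  refine sum_congr rfl fun π _ => ?_
  by_cases h : IsSimsun π
  swap
  · simp [sw_ins_of_not π h]; simp [sw, h]
  rw [Fin.sum_univ_succ]
  simp only [wordFn_ins_zero, wordFn_ins_succ, topEntry_true_neg,
    not_lt.2 (topEntry_false_pos n).le, sw_ins π h, if_true, if_false, Bool.false_eq_true]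
  simp only [sw, h, if_true]
  have h0 := wt_ins_zero_true π h
  rcases n with _ | n
  · have : ¬ wordFn π 1 < 0 := by simp [wordFn]
    rw [h0]; simp [this]; ring
  have hs := sum_ins_succ π h
  rw [sum_sub_distrib] at hs
  rcases lt_or_gt_of_ne (wordFn_one_ne π) with h1 | h1
  · rw [wt_ins_zero_false π h (Or.inl h1)] at hs
    simp only [h1, if_true, not_lt.2 h1.le, if_false, sum_add_distrib, ← mul_sum, false_or,
      Nat.add_eq_zero_iff, one_ne_zero, and_false] at h0 hs ⊢
    rw [h0]
    linear_combination eps π * hs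
  · simp only [h1, if_true, not_lt.2 h1.le, if_false, true_or] at h0 ⊢
    rw [h0]; simp; ring

open Polynomial in
/-- `D_n(x) − T_n(x) = D⁺_{n+1}(x) − T⁺_{n+1}(x)` and
`x·(D_n(x) − T_n(x)) = T⁻_{n+2}(x) − D⁻_{n+2}(x)`. -/
theorem stmt14 (n : ℕ) :
    Dpoly n - Tpoly n = Dppoly (n + 1) - Tppoly (n + 1) ∧
      X * (Dpoly n - Tpoly n) = Tmpoly (n + 2) - Dmpoly (n + 2) := by
  have hS : Dpoly n - Tpoly n = ∑ π : SignedPerm n, sw π := by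
    simpa [Dpoly, Tpoly] using sum_even_sub_odd (n := n) (fun _ => True)
  have hP : Dppoly (n + 1) - Tppoly (n + 1) = ∑ π : SignedPerm n, sw π := by
    rw [← pos_succ]; exact sum_even_sub_odd _
  have hM : Dmpoly (n + 2) - Tmpoly (n + 2) = -(X * ∑ π : SignedPerm n, sw π) := by
    rw [← pos_succ, ← neg_succ]; exact sum_even_sub_odd _
  refine ⟨by rw [hS, hP], ?_⟩
  rw [hS]
  linear_combination hM
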